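/- arXiv:math/0310473 — 2 statements merged into one kernel-verified Lean document; each statement's English description precedes it below -/
import Mathlib

section
/- (Gauss–Bonnet for ascending stratified curvature.) Let K be a finite n-dimensional simplicial complex embedded in Euclidean space, with n ≥ 2. Then Σ_{τ^p ∈ K} (−1)^p · K_a(τ^p) = χ^s(K), where the sum is over all simplices τ^p of K (p = dim τ^p), K_a denotes the ascending stratified curvature, and χ^s(K) is the stratified Euler characteristic of K. -/
open Filter MeasureTheory Geometry
open scoped BigOperators

noncomputable section

attribute [local instance 0] Classical.propDecidable

namespace AngleDefectPaper

/-- `N`-dimensional Euclidean space. -/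
abbrev Euc (N : ℕ) : Type := EuclideanSpace ℝ (Fin N)

variable {N : ℕ}

/-- The open simplex determined by a finite set of points: the intrinsic
(relative) interior of its convex hull. -/
def openSimplex (s : Finset (Euc N)) : Set (Euc N) :=
  intrinsicInterior ℝ (convexHull ℝ (s : Set (Euc N)))

/-- The normalized solid angle `α(η, σ)` of the simplex `σ` along its face `η`:
the fraction of a small sphere (in the affine span of `σ`) centered at a point of
the open face `η` that lies in `σ`, normalized so that the full sphere has
measure `1`.  It is computed as the limiting fraction of a small ambient ball
centered at the centroid of `η` that lies in the cylinder obtained by thickening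
`σ` in the directions orthogonal to its affine span. -/
def solidAngle (η σ : Finset (Euc N)) : ℝ :=
  limUnder (nhdsWithin (0 : ℝ) (Set.Ioi 0)) fun ε =>
    (volume (Metric.ball (η.centroid ℝ id) ε ∩
      {y : Euc N | ∃ c ∈ convexHull ℝ (σ : Set (Euc N)),
        ∃ w ∈ (vectorSpan ℝ (σ : Set (Euc N)))ᗮ, y = c + w})).toReal /
    (volume (Metric.ball (η.centroid ℝ id) ε)).toReal

/-- `Tcone r` is (a realization in the plane of) the open cone on `r` points:
`r` half-open segments emanating from the origin in pairwise distinct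
directions, glued at the origin.  For `r = 0` it is a single point. -/
def Tcone (r : ℕ) : Set (ℝ × ℝ) :=
  {0} ∪ ⋃ k ∈ Finset.range r,
    {p : ℝ × ℝ | ∃ t : ℝ, 0 ≤ t ∧ t < 1 ∧ p = t • ((1 : ℝ), (k : ℝ))}

/-- `x` has a neighborhood in `S` homeomorphic to `T_r × ℝ^{n-1}`, with the
homeomorphism taking `x` into the apex set `{cone point} × ℝ^{n-1}`. -/
def HasConeNbhd (n r : ℕ) (S : Set (Euc N)) (x : Euc N) : Prop :=
  ∃ U : Set (Euc N), U ∈ nhdsWithin x S ∧ U ⊆ S ∧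
    ∃ h : U ≃ₜ (Tcone r) × EuclideanSpace ℝ (Fin (n - 1)),
      ∀ hx : x ∈ U, ((h ⟨x, hx⟩).1 : ℝ × ℝ) = 0

/-- The set of points of `|K|` having a neighborhood of cone type `r`. -/
def csetAux (n : ℕ) (K : SimplicialComplex ℝ (Euc N)) (r : ℕ) : Set (Euc N) :=
  {x | x ∈ K.space ∧ HasConeNbhd n r K.space x}

/-- The sets `C_r(K)`: for `r ≠ 2` the points with a cone-type-`r` neighborhood,
and `C_2(K)` is the complement in `|K|` of the union of the others. -/
def cset (n : ℕ) (K : SimplicialComplex ℝ (Euc N)) (r : ℕ) : Set (Euc N) :=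
  if r = 2 then K.space \ ⋃ r' ∈ {r' : ℕ | r' ≠ 2}, csetAux n K r'
  else csetAux n K r

/-- The stratification rank `r(η) = r/2`, where `C_r(K)` is the (unique) set of
the stratification containing the open simplex of `η`. -/
def strRank (n : ℕ) (K : SimplicialComplex ℝ (Euc N)) (η : Finset (Euc N)) : ℝ :=
  if h : ∃ r : ℕ, r ≠ 2 ∧ openSimplex η ⊆ csetAux n K r then (h.choose : ℝ) / 2
  else 1

/-- The set of `n`-simplices of `K` having `η` as a face. -/
def nSimplicesOn (n : ℕ) (K : SimplicialComplex ℝ (Euc N)) (η : Finset (Euc N)) :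
    Set (Finset (Euc N)) :=
  {σ | σ ∈ K.faces ∧ σ.card = n + 1 ∧ η ⊆ σ}

/-- The generalized angle defect `D(η) = r(η) - Σ_{σⁿ ≻ η} α(η, σⁿ)`. -/
def defect (n : ℕ) (K : SimplicialComplex ℝ (Euc N)) (η : Finset (Euc N)) : ℝ :=
  strRank n K η - ∑ᶠ σ ∈ nSimplicesOn n K η, solidAngle η σ

/-- The angle defect sequence `a_m = 4 B_{m+2} (2^{m+2} - 1)/(m+2)`, where `B_k`
is the `k`-th Bernoulli number (with the convention `B_1 = -1/2`). -/
def ads (m : ℕ) : ℚ :=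
  4 * bernoulli (m + 2) * (2 ^ (m + 2) - 1) / (m + 2)

/-- The ascending stratified curvature of a simplex `τ` (of dimension
`p = τ.card - 1`) in the `n`-dimensional complex `K`. -/
def asc (n : ℕ) (K : SimplicialComplex ℝ (Euc N)) (τ : Finset (Euc N)) : ℝ :=
  (ads (τ.card - 1) : ℝ) * defect n K τ +
    (ads (τ.card - 1) : ℝ) / 2 *
      ∑ i ∈ Finset.Icc τ.card n,
        (-1 : ℝ) ^ (i - (τ.card - 1)) *
          ∑ᶠ η ∈ {η : Finset (Euc N) | η ∈ K.faces ∧ η.card = i + 1 ∧ τ ⊆ η},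
            defect n K η

/-- The stratified Euler characteristic `χˢ(K) = Σ_{η ∈ K} r(η) (-1)^{dim η}`. -/
def stratEuler (n : ℕ) (K : SimplicialComplex ℝ (Euc N)) : ℝ :=
  ∑ᶠ η ∈ K.faces, strRank n K η * (-1 : ℝ) ^ (η.card - 1)

/-- `fcount F k` is the number of `k`-dimensional simplices in `F`. -/
def fcount (F : Set (Finset (Euc N))) (k : ℕ) : ℕ :=
  {s ∈ F | s.card = k + 1}.ncard

/-- The combinatorial Euler characteristic `χ(F) = Σ_k (-1)^k f_k(F)`. -/
def eulerChar (F : Set (Finset (Euc N))) : ℤ :=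
  ∑ᶠ k : ℕ, (-1 : ℤ) ^ k * fcount F k

/-- The link of `η` in `K`: all simplices `ω` of `K` disjoint from `η` such
that the join `η ∗ ω` is a simplex of `K`. -/
def linkFaces (K : SimplicialComplex ℝ (Euc N)) (η : Finset (Euc N)) :
    Set (Finset (Euc N)) :=
  {ω | ω ∈ K.faces ∧ Disjoint η ω ∧ η ∪ ω ∈ K.faces}

/-- `K` is an `n`-dimensional simplicial complex. -/
def IsNDim (n : ℕ) (K : SimplicialComplex ℝ (Euc N)) : Prop :=
  (∀ s ∈ K.faces, s.card ≤ n + 1) ∧ ∃ s ∈ K.faces, s.card = n + 1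

/-- `L` is a subdivision of `K`: same underlying space, and every open simplex
of `L` is contained in an open simplex of `K`. -/
def IsSubdivision (K L : SimplicialComplex ℝ (Euc N)) : Prop :=
  L.space = K.space ∧ ∀ s ∈ L.faces, ∃ t ∈ K.faces, openSimplex s ⊆ openSimplex t

def tt (k : ℕ) : ℚ := 4 * bernoulli (k + 1) * (2 ^ (k + 1) - 1) / (k + 1)

lemma tt_succ (k : ℕ) : tt (k + 1) = ads k := by
  unfold tt ads; push_cast; congr 1; ring

lemma tt_zero : tt 0 = -2 := by
  norm_num [tt]

open PowerSeries in
lemma tt_series : (PowerSeries.mk fun k => tt k / (k.factorial : ℚ)) * (PowerSeries.exp ℚ + 1) = PowerSeries.C (-4 : ℚ) := by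
  set e := PowerSeries.exp ℚ with he
  set B := bernoulliPowerSeries ℚ with hB
  have h1 : B * (e - 1) = X := bernoulliPowerSeries_mul_exp_sub_one ℚ
  have h2 : rescale (2 : ℚ) B * (e ^ 2 - 1) = PowerSeries.C 2 * X := by
    have := congrArg (rescale (2 : ℚ)) h1
    rw [map_mul, map_sub, map_one, rescale_X] at this
    rw [← this, he, PowerSeries.exp_pow_eq_rescale_exp]
    norm_num
  have hX : X * (PowerSeries.mk fun k => tt k / (k.factorial : ℚ)) = PowerSeries.C 4 * (rescale (2 : ℚ) B - B) := by
    ext k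
    cases k with
    | zero => 
      rw [coeff_zero_X_mul, coeff_C_mul, map_sub, coeff_rescale]; simp
    | succ k =>
      rw [mul_comm X, coeff_succ_mul_X, coeff_mk, coeff_C_mul, map_sub, coeff_rescale, hB, bernoulliPowerSeries, coeff_mk]
      have : ((k.factorial : ℕ) : ℚ) ≠ 0 := by positivity
      simp only [tt, Nat.factorial_succ]
      push_cast
      have : (k : ℚ) + 1 ≠ 0 := by positivity
      field_simp
      simp
      field_simp
  have hne : e - 1 ≠ 0 := by
    intro h
    rw [h, mul_zero] at h1
    exact X_ne_zero h1.symm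
  have hC : (PowerSeries.C (2:ℚ) : PowerSeries ℚ) = 2 := map_ofNat _ 2
  have hC4 : (PowerSeries.C (4:ℚ) : PowerSeries ℚ) = 4 := map_ofNat _ 4
  apply mul_left_cancel₀ (X_ne_zero (R := ℚ))
  apply mul_right_cancel₀ hne
  rw [← mul_assoc, hX, map_neg, hC4]
  rw [hC] at h2
  linear_combination 4 * h2 - 4 * (e + 1) * h1

open PowerSeries in
lemma tt_sum (m : ℕ) (hm : m ≠ 0) : ∑ k ∈ Finset.range (m + 1), (m.choose k : ℚ) * tt k + tt m = 0 := by
  have h := congrArg (coeff m) tt_series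
  rw [mul_add, mul_one, map_add, coeff_mul, coeff_mk, coeff_C, if_neg hm,
    Finset.Nat.sum_antidiagonal_eq_sum_range_succ_mk] at h
  have hf : ((m.factorial : ℕ) : ℚ) ≠ 0 := by positivity
  have h' := congrArg (fun x => (m.factorial : ℚ) * x) h
  simp only [mul_add, mul_zero, Finset.mul_sum] at h'
  rw [← h']
  congr 1
  · refine Finset.sum_congr rfl fun k hk => ?_
    have hk : k ≤ m := by simpa [Nat.lt_succ_iff] using hk
    have := Nat.choose_mul_factorial_mul_factorial hk
    rw [← this]
    have h1 : ((k.factorial : ℕ) : ℚ) ≠ 0 := by positivity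
    have h2 : (((m-k).factorial : ℕ) : ℚ) ≠ 0 := by positivity
    simp [coeff_exp]
    field_simp
  · field_simp

lemma exists_coords {N : ℕ} (σ : Finset (Euc N)) (hne : σ.Nonempty)
    (hind : AffineIndependent ℝ ((↑) : σ → Euc N)) :
    ∃ (l : Euc N → (Euc N →L[ℝ] ℝ)) (c : Euc N → ℝ),
      (∀ v ∈ σ, ∀ w ∈ σ, l v w + c v = if v = w then 1 else 0) ∧
      (∑ v ∈ σ, l v = 0) ∧
      (∀ y : Euc N, (∃ p ∈ convexHull ℝ (σ : Set (Euc N)),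
        ∃ w ∈ (vectorSpan ℝ (σ : Set (Euc N)))ᗮ, y = p + w) ↔ ∀ v ∈ σ, 0 ≤ l v y + c v) := by
  obtain ⟨v0, hv0⟩ := hne
  set V := vectorSpan ℝ (σ : Set (Euc N)) with hV
  have hli := (affineIndependent_iff_linearIndependent_vsub ℝ _ (⟨v0, hv0⟩ : σ)).1 hind
  set b0 : {x : σ // x ≠ ⟨v0, hv0⟩} → Euc N := fun i => (i : Euc N) -ᵥ v0 with hb0
  have hspan : Submodule.span ℝ (Set.range b0) = V := by
    have := vectorSpan_range_eq_span_range_vsub_right_ne ℝ ((↑) : σ → Euc N) ⟨v0, hv0⟩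
    rw [hV, hb0, ← this]
    simp
  let b := Module.Basis.span hli
  have hbv : ∀ i, ((b i : _) : Euc N) = b0 i := fun i => by
    simp [b, Module.Basis.span_apply, hb0]
  -- orthogonal projection and coordinates
  let P : Euc N →L[ℝ] (Submodule.span ℝ (Set.range b0)) := (Submodule.span ℝ (Set.range b0)).orthogonalProjectionOnto
  let k : Euc N → (Euc N →L[ℝ] ℝ) := fun v =>
    if h : ∃ h : v ∈ σ, (⟨v, h⟩ : σ) ≠ ⟨v0, hv0⟩ then
      (LinearMap.toContinuousLinearMap (b.coord ⟨⟨v, h.1⟩, h.2⟩)).comp P else 0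
  have hk : ∀ (i : {x : σ // x ≠ ⟨v0, hv0⟩}) y, k i y = b.coord i (P y) := by
    intro i y
    have : ∃ h : (i : Euc N) ∈ σ, (⟨i, h⟩ : σ) ≠ ⟨v0, hv0⟩ := ⟨i.1.2, i.2⟩
    simp only [k, dif_pos this]
    rfl
  have hk0 : k v0 = 0 := by
    simp [k]
  let l : Euc N → (Euc N →L[ℝ] ℝ) := fun v => k v - if v = v0 then ∑ w ∈ σ, k w else 0
  let c : Euc N → ℝ := fun v => (if v = v0 then 1 else 0) - l v v0
  have hlc : ∀ v y, l v y + c v = k v (y - v0) + (if v = v0 then 1 - ∑ w ∈ σ, k w (y - v0) else 0) := by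
    intro v y
    simp only [c, l]
    split_ifs <;> simp <;> ring
  have hsuml : ∑ v ∈ σ, l v = 0 := by
    simp [l, Finset.sum_sub_distrib, hv0]
  have hsum1 : ∀ y, ∑ v ∈ σ, (l v y + c v) = 1 := by
    intro y
    simp only [hlc, Finset.sum_add_distrib, Finset.sum_ite_eq', hv0, if_true]
    ring
  have hkv : ∀ v ∈ σ, ∀ w ∈ σ, k v (w - v0) = if v = w ∧ v ≠ v0 then 1 else 0 := by
    intro v hv w hw
    by_cases h1 : v = v0
    · subst h1; simp [hk0]
    by_cases h2 : w = v0
    · subst h2; simp [h1]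
    let i : {x : σ // x ≠ ⟨v0, hv0⟩} := ⟨⟨v, hv⟩, by simpa using h1⟩
    let j : {x : σ // x ≠ ⟨v0, hv0⟩} := ⟨⟨w, hw⟩, by simpa using h2⟩
    have e1 : k v (w - v0) = b.coord i (P (w - v0)) := hk i _
    have e2 : P (w - v0) = b j := by
      have : w - v0 = ((b j : _) : Euc N) := by rw [hbv]; rfl
      rw [this]
      exact Submodule.orthogonalProjectionOnto_mem_subspace_eq_self _
    rw [e1, e2, Module.Basis.coord_apply, Module.Basis.repr_self, Finsupp.single_apply]
    have : j = i ↔ v = w := by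
      simp [i, j, eq_comm]
    simp [this, h1]
  have hval : ∀ v ∈ σ, ∀ w ∈ σ, l v w + c v = if v = w then 1 else 0 := by
    intro v hv w hw
    have hs : ∑ u ∈ σ, k u (w - v0) = if w = v0 then 0 else 1 := by
      rw [Finset.sum_congr rfl fun u hu => hkv u hu w hw]
      by_cases h : w = v0
      · subst h
        simp
      · simp only [h, if_false]
        rw [Finset.sum_eq_single w]
        · simp [h]
        · intro u _ hu; simp [hu]
        · intro h; exact absurd hw h
    rw [hlc, hkv v hv w hw, hs]
    by_cases h1 : v = v0
    · subst h1
      by_cases h2 : v = w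
      · simp [h2]
      · simp [h2, Ne.symm h2]
    · simp [h1]
  have hVk : ∀ v, ∀ w ∈ Vᗮ, k v w = 0 := by
    intro v w hw
    have : P w = 0 := by
      rw [← hspan] at hw
      exact Submodule.orthogonalProjectionOnto_apply_of_mem_orthogonal hw
    simp only [k]
    split_ifs
    · simp [this]
    · simp
  refine ⟨l, c, hval, hsuml, ?_⟩
  intro y
  constructor
  · rintro ⟨p, hp, w, hw, rfl⟩ v hv
    have hlw : l v w = 0 := by
      simp only [l]
      split_ifs <;> simp [hVk _ w hw]
    rw [map_add, hlw, add_zero]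
    have : convexHull ℝ (σ : Set (Euc N)) ⊆ {x | -c v ≤ l v x} := by
      apply convexHull_min
      · intro x hx
        have := hval v hv x hx
        have h2 : 0 ≤ l v x + c v := by rw [this]; split_ifs <;> norm_num
        show -c v ≤ l v x
        linarith
      · exact convex_halfSpace_ge (l v).toLinearMap.isLinear _
    have := this hp
    simp only [Set.mem_ofPred_eq] at this
    linarith
  · intro h
    refine ⟨∑ v ∈ σ, (l v y + c v) • v, ?_, y - ∑ v ∈ σ, (l v y + c v) • v, ?_, by abel⟩
    · exact (convex_convexHull ℝ _).sum_mem h (hsum1 y) fun v hv => subset_convexHull ℝ _ hv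
    · have e1 : ∑ v ∈ σ, (l v y + c v) • v = v0 + ((P (y - v0) : _) : Euc N) := by
        have e2 : ∑ v ∈ σ, (l v y + c v) • v = v0 + ∑ v ∈ σ, (l v y + c v) • (v - v0) := by
          simp only [smul_sub, Finset.sum_sub_distrib, ← Finset.sum_smul, hsum1, one_smul]
          abel
        rw [e2]
        congr 1
        have e3 := congrArg (Subtype.val) (b.sum_repr (P (y - v0)))
        rw [← e3]
        simp only [Submodule.coe_sum, Submodule.coe_smul, hbv]
        rw [← Finset.sum_coe_sort σ]
        rw [← Fintype.sum_subtype_add_sum_subtype (fun x : σ => x ≠ ⟨v0, hv0⟩)]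
        have z : ∑ x : {x : σ // ¬ (x ≠ ⟨v0, hv0⟩)},
            (l (x : Euc N) y + c (x : Euc N)) • ((x : Euc N) - v0) = 0 := by
          refine Finset.sum_eq_zero fun x _ => ?_
          have hx : (x : σ) = ⟨v0, hv0⟩ := not_not.1 x.2
          simp [hx]
        rw [z, add_zero]
        refine Finset.sum_congr (by ext; simp) fun i _ => ?_
        have hi : ((i : σ) : Euc N) ≠ v0 := fun h => i.2 (Subtype.ext h)
        rw [hlc, hk i, if_neg hi, add_zero]
        rfl
      rw [e1, ← hspan]
      have := (Submodule.span ℝ (Set.range b0)).sub_starProjection_mem_orthogonal (y - v0)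
      convert this using 1
      have hs : ((P (y - v0) : _) : Euc N) =
          (Submodule.span ℝ (Set.range b0)).starProjection (y - v0) := rfl
      rw [hs]
      abel

/-- tangent cone of the simplex along a face, intersected with the unit ball -/
def coneBall {N : ℕ} (l : Euc N → (Euc N →L[ℝ] ℝ)) (η σ : Finset (Euc N)) : Set (Euc N) :=
  Metric.ball 0 1 ∩ {u | ∀ v ∈ σ, v ∉ η → 0 ≤ l v u}

lemma measurableSet_coneBall {N : ℕ} (l : Euc N → (Euc N →L[ℝ] ℝ)) (η σ : Finset (Euc N)) :
    MeasurableSet (coneBall l η σ) := by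
  refine Metric.isOpen_ball.measurableSet.inter (IsClosed.measurableSet ?_)
  simp only [Set.ofPred_forall]
  exact isClosed_iInter fun v => isClosed_iInter fun _ => isClosed_iInter fun _ =>
    isClosed_le continuous_const (l v).continuous

lemma solidAngle_eq {N : ℕ} (l : Euc N → (Euc N →L[ℝ] ℝ)) (c : Euc N → ℝ) (η σ : Finset (Euc N))
    (hη : η.Nonempty) (hsub : η ⊆ σ)
    (h1 : ∀ v ∈ σ, ∀ w ∈ σ, l v w + c v = if v = w then 1 else 0)
    (h3 : ∀ y : Euc N, (∃ p ∈ convexHull ℝ (σ : Set (Euc N)),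
        ∃ w ∈ (vectorSpan ℝ (σ : Set (Euc N)))ᗮ, y = p + w) ↔ ∀ v ∈ σ, 0 ≤ l v y + c v) :
    solidAngle η σ = (volume (coneBall l η σ)).toReal /
      (volume (Metric.ball (0 : Euc N) 1)).toReal := by
  set z := η.centroid ℝ id with hz
  have hcard : (0 : ℝ) < η.card := by exact_mod_cast hη.card_pos
  have hzv : ∀ v ∈ σ, l v z + c v = if v ∈ η then (η.card : ℝ)⁻¹ else 0 := by
    intro v hv
    have hw : ∑ i ∈ η, (η.card : ℝ)⁻¹ = 1 := by
      rw [Finset.sum_const, nsmul_eq_mul, mul_inv_cancel₀ hcard.ne']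
    have : z = ∑ w ∈ η, (η.card : ℝ)⁻¹ • w := by
      rw [hz, Finset.centroid_eq_centerMass _ hη, Finset.centerMass_eq_of_sum_1]
      · simp
      · simpa using hw
    have h2 : l v z + c v = ∑ w ∈ η, (η.card : ℝ)⁻¹ * (l v w + c v) := by
      simp only [mul_add, Finset.sum_add_distrib, ← Finset.sum_mul, hw, this]
      simp
    rw [h2, Finset.sum_congr rfl fun w hw => by rw [h1 v hv w (hsub hw)]]
    simp
  have hev : ∀ᶠ y in nhds z, ∀ v ∈ η, 0 ≤ l v y + c v := by
    rw [Filter.eventually_all_finset]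
    intro v hv
    have : Tendsto (fun y => l v y + c v) (nhds z) (nhds (l v z + c v)) :=
      ((l v).continuous.add continuous_const).tendsto z
    have hp : 0 < l v z + c v := by
      rw [hzv v (hsub hv), if_pos hv]; positivity
    filter_upwards [this.eventually (lt_mem_nhds hp)] with y hy using hy.le
  obtain ⟨δ, hδ, hball⟩ := Metric.eventually_nhds_iff_ball.1 hev
  unfold solidAngle
  apply Tendsto.limUnder_eq
  apply tendsto_const_nhds.congr'
  have hmem : Set.Ioo 0 δ ∈ nhdsWithin (0 : ℝ) (Set.Ioi 0) := Ioo_mem_nhdsGT hδ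
  filter_upwards [hmem] with ε hε
  have hε0 : 0 < ε := hε.1
  have key : ∀ A : Set (Euc N), volume ((fun y => y - z) ⁻¹' ((fun y => ε⁻¹ • y) ⁻¹' A)) =
      ENNReal.ofReal (abs ((ε⁻¹) ^ (Module.finrank ℝ (Euc N)))⁻¹) * volume A := by
    intro A
    simp only [sub_eq_add_neg]
    rw [measure_preimage_add_right, Measure.addHaar_preimage_smul _ (inv_ne_zero hε0.ne')]
  have hb : ∀ y, ‖ε⁻¹ • (y - z)‖ < 1 ↔ y ∈ Metric.ball z ε := by
    intro y
    rw [norm_smul, norm_inv, Real.norm_of_nonneg hε0.le, inv_mul_lt_iff₀ hε0, mul_one,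
      mem_ball_iff_norm]
  have e1 : Metric.ball z ε = (fun y => y - z) ⁻¹' ((fun y => ε⁻¹ • y) ⁻¹' (Metric.ball 0 1)) := by
    ext y
    rw [← hb]
    simp only [Set.mem_preimage, mem_ball_zero_iff]
  have e2 : Metric.ball z ε ∩ {y : Euc N | ∃ c ∈ convexHull ℝ (σ : Set (Euc N)),
        ∃ w ∈ (vectorSpan ℝ (σ : Set (Euc N)))ᗮ, y = c + w} =
      (fun y => y - z) ⁻¹' ((fun y => ε⁻¹ • y) ⁻¹' (coneBall l η σ)) := by
    ext y
    simp only [coneBall, Set.mem_inter_iff, Set.mem_preimage, Set.mem_ofPred_eq, h3,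
      mem_ball_zero_iff, hb]
    refine and_congr_right fun hy => ?_
    have hin : ∀ v ∈ η, 0 ≤ l v y + c v :=
      hball y (Metric.ball_subset_ball hε.2.le hy)
    have hl : ∀ v ∈ σ, v ∉ η → l v (ε⁻¹ • (y - z)) = ε⁻¹ * (l v y + c v) := by
      intro v hv hvn
      have := hzv v hv
      rw [if_neg hvn] at this
      rw [map_smul, map_sub, smul_eq_mul]
      congr 1
      linarith
    constructor
    · intro h v hv hvn
      rw [hl v hv hvn]
      exact mul_nonneg (inv_nonneg.2 hε0.le) (h v hv)
    · intro h v hv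
      by_cases hvn : v ∈ η
      · exact hin v hvn
      · have := h v hv hvn
        rw [hl v hv hvn] at this
        exact nonneg_of_mul_nonneg_right this (inv_pos.2 hε0)
  rw [e2, e1, key, key, ENNReal.toReal_mul, ENNReal.toReal_mul, mul_div_mul_left]
  rw [ENNReal.toReal_ofReal (abs_nonneg _)]
  positivity

lemma sum_neg_one_between {α : Type*} [DecidableEq α] (σ M : Finset α)
    (hMσ : M ⊂ σ) :
    ∑ η ∈ σ.powerset, (if M ⊆ η then (-1 : ℝ) ^ (η.card) else 0) = 0 := by
  obtain ⟨v, hv, hvM⟩ := Finset.exists_of_ssubset hMσ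
  obtain ⟨hs, _⟩ := hMσ
  have : σ = insert v (σ.erase v) := (Finset.insert_erase hv).symm
  rw [this, Finset.sum_powerset_insert (Finset.notMem_erase v σ), ← Finset.sum_add_distrib]
  refine Finset.sum_eq_zero fun η hη => ?_
  have hvη : v ∉ η := fun h => Finset.notMem_erase v σ (Finset.mem_powerset.1 hη h)
  have : M ⊆ insert v η ↔ M ⊆ η := by
    rw [Finset.subset_insert_iff_of_notMem hvM]
  rw [Finset.card_insert_of_notMem hvη]
  simp only [this]
  split_ifs <;> ring

lemma gram {N : ℕ} (σ : Finset (Euc N)) (hcard : 2 ≤ σ.card)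
    (l : Euc N → (Euc N →L[ℝ] ℝ)) (c : Euc N → ℝ)
    (h1 : ∀ v ∈ σ, ∀ w ∈ σ, l v w + c v = if v = w then 1 else 0)
    (h2 : ∑ v ∈ σ, l v = 0) :
    ∑ η ∈ σ.powerset.filter Finset.Nonempty,
      (-1 : ℝ) ^ η.card * (volume (coneBall l η σ)).toReal = 0 := by
  let U : Submodule ℝ (Euc N) := ⨅ v ∈ σ, LinearMap.ker (l v).toLinearMap
  have hU : U ≠ ⊤ := by
    intro h
    obtain ⟨v, hv, w, hw, hvw⟩ := Finset.one_lt_card.1 hcard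
    have hm : v - w ∈ U := h ▸ Submodule.mem_top
    simp only [U, Submodule.mem_iInf] at hm
    have h0 : l v (v - w) = 0 := by simpa using hm v hv
    have ha := h1 v hv v hv
    have hb := h1 v hv w hw
    simp only [if_true, hvw, if_false] at ha hb
    rw [map_sub] at h0
    linarith
  have hU0 : volume (U : Set (Euc N)) = 0 := Measure.addHaar_submodule volume U hU
  have hvolint : ∀ η, (volume (coneBall l η σ)).toReal =
      ∫ u, (coneBall l η σ).indicator (fun _ => (1 : ℝ)) u := by
    intro η
    rw [integral_indicator (measurableSet_coneBall l η σ)]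
    simp [measureReal_def]
  have hI : ∀ η, Integrable ((coneBall l η σ).indicator (fun _ => (1 : ℝ))) volume := by
    intro η
    rw [integrable_indicator_iff (measurableSet_coneBall l η σ)]
    refine integrableOn_const (hs := ?_)
    exact ((measure_mono Set.inter_subset_left).trans_lt measure_ball_lt_top).ne
  simp only [hvolint, ← integral_const_mul]
  rw [← integral_finsetSum _ fun η _ => (hI η).const_mul _]
  apply integral_eq_zero_of_ae
  have : ∀ᵐ u ∂(volume : Measure (Euc N)), u ∉ (U : Set (Euc N)) := measure_eq_zero_iff_ae_notMem.1 hU0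
  filter_upwards [this] with u hu
  simp only [Pi.zero_apply]
  by_cases hub : u ∈ Metric.ball (0 : Euc N) 1
  swap
  · refine Finset.sum_eq_zero fun η _ => ?_
    rw [Set.indicator_of_notMem (fun h => hub h.1), mul_zero]
  set M := σ.filter (fun v => l v u < 0) with hMdef
  have hsum : ∑ v ∈ σ, l v u = 0 := by
    have := congrArg (fun f => f u) h2
    simpa using this
  have hMne : M.Nonempty := by
    by_contra hM
    rw [Finset.not_nonempty_iff_eq_empty, hMdef, Finset.filter_eq_empty_iff] at hM
    have hnn : ∀ v ∈ σ, 0 ≤ l v u := fun v hv => not_lt.1 (hM hv)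
    have hz := (Finset.sum_eq_zero_iff_of_nonneg hnn).1 hsum
    apply hu
    simp only [U, SetLike.mem_coe, Submodule.mem_iInf]
    intro v hv
    simpa using hz v hv
  have hMσ : M ⊂ σ := by
    refine Finset.filter_ssubset.2 ?_
    by_contra hcon
    push Not at hcon
    have hne : σ.Nonempty := Finset.card_pos.1 (by omega)
    have := Finset.sum_neg hcon hne
    linarith
  rw [← sum_neg_one_between σ M hMσ, Finset.sum_filter]
  refine Finset.sum_congr rfl fun η hη => ?_
  have hmem : u ∈ coneBall l η σ ↔ M ⊆ η := by
    simp only [coneBall, Set.mem_inter_iff, hub, true_and, Set.mem_ofPred_eq, hMdef,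
      Finset.subset_iff, Finset.mem_filter, and_imp]
    refine forall_congr' fun v => forall_congr' fun _ => ?_
    rw [← not_lt]
    tauto
  by_cases hMη : M ⊆ η
  · rw [if_pos (hMne.mono hMη), Set.indicator_of_mem (hmem.2 hMη), if_pos hMη, mul_one]
  · rw [Set.indicator_of_notMem (fun h => hMη (hmem.1 h)), if_neg hMη, mul_zero, ite_self]

lemma gram_solidAngle {N : ℕ} (σ : Finset (Euc N)) (hcard : 2 ≤ σ.card)
    (hind : AffineIndependent ℝ ((↑) : σ → Euc N)) :
    ∑ η ∈ σ.powerset.filter Finset.Nonempty,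
      (-1 : ℝ) ^ (η.card - 1) * solidAngle η σ = 0 := by
  obtain ⟨l, c, h1, h2, h3⟩ := exists_coords σ (Finset.card_pos.1 (by omega)) hind
  have hg := gram σ hcard l c h1 h2
  have : ∀ η ∈ σ.powerset.filter Finset.Nonempty,
      (-1 : ℝ) ^ (η.card - 1) * solidAngle η σ =
      ((-1 : ℝ) ^ η.card * (volume (coneBall l η σ)).toReal) *
        (-(volume (Metric.ball (0 : Euc N) 1)).toReal⁻¹) := by
    intro η hη
    rw [Finset.mem_filter, Finset.mem_powerset] at hη
    rw [solidAngle_eq l c η σ hη.2 hη.1 h1 h3]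
    obtain ⟨k, hk⟩ : ∃ k, η.card = k + 1 := ⟨η.card - 1, by have := hη.2.card_pos; omega⟩
    rw [hk, Nat.add_sub_cancel, pow_succ]
    ring
  rw [Finset.sum_congr rfl this, ← Finset.sum_mul, hg, zero_mul]

lemma ads_sum {α : Type*} (η : Finset α) (hη : η.Nonempty) :
    ((ads (η.card - 1) : ℚ) : ℝ) + ∑ τ ∈ η.powerset.filter (fun τ => τ.Nonempty ∧ τ ⊂ η),
      ((ads (τ.card - 1) : ℚ) : ℝ) / 2 = 1 := by
  have hpos := hη.card_pos
  have ht : ∀ τ : Finset α, τ.Nonempty → ads (τ.card - 1) = tt τ.card := by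
    intro τ h
    rw [← tt_succ, Nat.sub_add_cancel h.card_pos]
  have hs := tt_sum η.card hpos.ne'
  have h1 : ∑ τ ∈ η.powerset, tt τ.card = ∑ k ∈ Finset.range (η.card + 1), (η.card.choose k : ℚ) * tt k := by
    rw [Finset.sum_powerset_apply_card]
    simp
  have h2 : η.powerset = insert ∅ (insert η (η.powerset.filter (fun τ => τ.Nonempty ∧ τ ⊂ η))) := by
    ext τ
    simp only [Finset.mem_powerset, Finset.mem_insert, Finset.mem_filter]
    constructor
    · intro h
      by_cases h0 : τ = ∅
      · exact Or.inl h0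
      by_cases h3 : τ = η
      · exact Or.inr (Or.inl h3)
      · exact Or.inr (Or.inr ⟨h, Finset.nonempty_iff_ne_empty.2 h0, h.ssubset_of_ne h3⟩)
    · rintro (rfl | rfl | h)
      · exact Finset.empty_subset _
      · exact subset_rfl
      · exact h.1
  have h3 : ∑ τ ∈ η.powerset, tt τ.card = -2 + (tt η.card +
      ∑ τ ∈ η.powerset.filter (fun τ => τ.Nonempty ∧ τ ⊂ η), tt τ.card) := by
    conv_lhs => rw [h2]
    rw [Finset.sum_insert, Finset.sum_insert]
    · rw [Finset.card_empty, tt_zero]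
    · simp
    · simp [hη.ne_empty.symm]
  have h4 : ∑ τ ∈ η.powerset.filter (fun τ => τ.Nonempty ∧ τ ⊂ η), ads (τ.card - 1) =
      ∑ τ ∈ η.powerset.filter (fun τ => τ.Nonempty ∧ τ ⊂ η), tt τ.card :=
    Finset.sum_congr rfl fun τ hτ => ht τ (Finset.mem_filter.1 hτ).2.1
  have h5 : ads (η.card - 1) + (∑ τ ∈ η.powerset.filter (fun τ => τ.Nonempty ∧ τ ⊂ η),
      ads (τ.card - 1)) / 2 = 1 := by
    rw [h4, ht η hη]
    linarith
  rw [← Finset.sum_div]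
  exact_mod_cast h5

lemma asc_eq {N n : ℕ} (K : SimplicialComplex ℝ (Euc N)) (hfin : K.faces.Finite)
    (hdim : IsNDim n K) (τ : Finset (Euc N)) (hτ : τ.Nonempty) :
    (-1 : ℝ) ^ (τ.card - 1) * asc n K τ =
      (ads (τ.card - 1) : ℝ) * ((-1 : ℝ) ^ (τ.card - 1) * defect n K τ) +
      ∑ η ∈ hfin.toFinset with τ ⊂ η,
        (ads (τ.card - 1) : ℝ) / 2 * ((-1 : ℝ) ^ (η.card - 1) * defect n K η) := by
  have hpos := hτ.card_pos
  have hset : ∀ i, ∑ᶠ η ∈ {η : Finset (Euc N) | η ∈ K.faces ∧ η.card = i + 1 ∧ τ ⊆ η},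
      defect n K η = ∑ η ∈ hfin.toFinset with (η.card = i + 1 ∧ τ ⊆ η), defect n K η := by
    intro i
    apply finsum_mem_eq_sum_of_inter_support_eq
    congr 1
    ext η
    simp
  unfold asc
  simp only [hset]
  rw [mul_add]
  congr 1
  · ring
  have hmaps : ∀ η ∈ hfin.toFinset.filter (fun η => τ ⊂ η), η.card - 1 ∈ Finset.Icc τ.card n := by
    intro η hη
    rw [Finset.mem_filter, Set.Finite.mem_toFinset] at hη
    have := Finset.card_lt_card hη.2
    have := hdim.1 η hη.1
    rw [Finset.mem_Icc]
    omega
  rw [← Finset.sum_fiberwise_of_maps_to hmaps, Finset.mul_sum, Finset.mul_sum]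
  refine Finset.sum_congr rfl fun i hi => ?_
  rw [Finset.mem_Icc] at hi
  have hf : (hfin.toFinset.filter (fun η => τ ⊂ η)).filter (fun η => η.card - 1 = i) =
      hfin.toFinset.filter (fun η => η.card = i + 1 ∧ τ ⊆ η) := by
    ext η
    simp only [Finset.mem_filter]
    constructor
    · rintro ⟨⟨h1, h2⟩, h3⟩
      have := Finset.card_lt_card h2
      exact ⟨h1, by omega, h2.subset⟩
    · rintro ⟨h1, h2, h3⟩
      refine ⟨⟨h1, h3.ssubset_of_ne ?_⟩, by omega⟩
      rintro rfl
      omega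
  rw [hf, Finset.mul_sum, Finset.mul_sum, Finset.mul_sum]
  refine Finset.sum_congr rfl fun η hη => ?_
  have hc : η.card - 1 = (τ.card - 1) + (i - (τ.card - 1)) := by
    have := (Finset.mem_filter.1 hη).2.1
    omega
  rw [hc, pow_add]
  ring

/-- Gauss-Bonnet for ascending stratified curvature: for a finite
`n`-dimensional simplicial complex `K` (with `n ≥ 2`),
`Σ_{τ ∈ K} (-1)^{dim τ} K_a(τ) = χˢ(K)`. -/
theorem gaussBonnet_asc {N n : ℕ} (hn : 2 ≤ n) (K : SimplicialComplex ℝ (Euc N))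
    (hfin : K.faces.Finite) (hdim : IsNDim n K) :
    ∑ᶠ τ ∈ K.faces, (-1 : ℝ) ^ (τ.card - 1) * asc n K τ = stratEuler n K := by
  unfold stratEuler
  rw [finsum_mem_eq_finite_toFinset_sum _ hfin, finsum_mem_eq_finite_toFinset_sum _ hfin]
  have hne : ∀ τ ∈ hfin.toFinset, τ.Nonempty := fun τ hτ =>
    K.nonempty_of_mem_faces (hfin.mem_toFinset.1 hτ)
  have hsubf : ∀ η ∈ hfin.toFinset, ∀ τ ⊆ η, τ.Nonempty → τ ∈ hfin.toFinset :=
    fun η hη τ hs hτ => hfin.mem_toFinset.2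
      ((K.isRelLowerSet_faces (hfin.mem_toFinset.1 hη)).2 hs hτ)
  rw [Finset.sum_congr rfl fun τ hτ => asc_eq K hfin hdim τ (hne τ hτ), Finset.sum_add_distrib]
  simp only [Finset.sum_filter]
  rw [Finset.sum_comm, ← Finset.sum_add_distrib]
  have hstep : ∀ η ∈ hfin.toFinset,
      (ads (η.card - 1) : ℝ) * ((-1 : ℝ) ^ (η.card - 1) * defect n K η) +
      ∑ τ ∈ hfin.toFinset, (if τ ⊂ η then
        (ads (τ.card - 1) : ℝ) / 2 * ((-1 : ℝ) ^ (η.card - 1) * defect n K η) else 0) =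
      strRank n K η * (-1 : ℝ) ^ (η.card - 1) -
        ∑ σ ∈ hfin.toFinset with σ.card = n + 1,
          if η ⊆ σ then (-1 : ℝ) ^ (η.card - 1) * solidAngle η σ else 0 := by
    intro η hη
    have hf : hfin.toFinset.filter (fun τ => τ ⊂ η) =
        η.powerset.filter (fun τ => τ.Nonempty ∧ τ ⊂ η) := by
      ext τ
      simp only [Finset.mem_filter, Finset.mem_powerset]
      exact ⟨fun h => ⟨h.2.subset, hne τ h.1, h.2⟩,
        fun h => ⟨hsubf η hη τ h.1 h.2.1, h.2.2⟩⟩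
    rw [← Finset.sum_filter, hf, ← Finset.sum_mul, ← add_mul]
    have hads := ads_sum η (hne η hη)
    rw [show _ + _ = (1 : ℝ) by convert hads, one_mul]
    unfold defect
    have hset : ∑ᶠ σ ∈ nSimplicesOn n K η, solidAngle η σ =
        ∑ σ ∈ hfin.toFinset with (σ.card = n + 1 ∧ η ⊆ σ), solidAngle η σ := by
      apply finsum_mem_eq_sum_of_inter_support_eq
      congr 1
      ext σ
      simp [nSimplicesOn]
    rw [hset, mul_sub, mul_comm, ← Finset.sum_filter, Finset.filter_filter, Finset.mul_sum]
  rw [Finset.sum_congr rfl hstep, Finset.sum_sub_distrib, Finset.sum_comm, sub_eq_self]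
  refine Finset.sum_eq_zero fun σ hσ => ?_
  rw [Finset.mem_filter] at hσ
  rw [← Finset.sum_filter, ← gram_solidAngle σ (by omega) (K.indep (hfin.mem_toFinset.1 hσ.1))]
  refine Finset.sum_congr ?_ fun _ _ => rfl
  ext τ
  simp only [Finset.mem_filter, Finset.mem_powerset]
  exact ⟨fun h => ⟨h.2, hne τ h.1⟩, fun h => ⟨hsubf σ hσ.1 τ h.1 h.2, h.1⟩⟩

end AngleDefectPaper
end
end

section
/- Let K be a finite n-dimensional simplicial complex embedded in Euclidean space, where n is an odd integer with n ≥ 3. Suppose that χ(link(η^i, K)) = 2 for every i-simplex η^i of K, for every even integer i with 0 ≤ i ≤ n−1. Then χ(K) = 0, where χ denotes the combinatorial Euler characteristic Σ_k (−1)^k f_k. -/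
open Filter MeasureTheory Geometry
open scoped BigOperators

noncomputable section

attribute [local instance 0] Classical.propDecidable

namespace AngleDefectPaper

variable {N : ℕ}

/-- The Euler characteristic of a finite family of nonempty sets as a sum over its members. -/
lemma eulerChar_eq_sum (A : Finset (Finset (Euc N))) (hA : ∀ s ∈ A, s.Nonempty) :
    eulerChar (A : Set (Finset (Euc N))) = - ∑ s ∈ A, (-1 : ℤ) ^ s.card := by
  have hc : ∀ k : ℕ, (fcount (A : Set (Finset (Euc N))) k)
      = (A.filter fun s => s.card = k + 1).card := by
    intro k
    unfold fcount
    rw [← Set.ncard_coe_finset]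
    congr 1
    ext s
    simp
  unfold eulerChar
  have hsupp : (Function.support fun k : ℕ =>
      (-1 : ℤ) ^ k * (fcount (A : Set (Finset (Euc N))) k : ℤ)) ⊆
      (A.image (fun s : Finset (Euc N) => s.card - 1) : Set ℕ) := by
    intro k hk
    rw [Function.mem_support, hc] at hk
    have h1 : (A.filter fun s => s.card = k + 1).card ≠ 0 := by
      intro h; apply hk; simp [h]
    obtain ⟨s, hs⟩ := Finset.card_ne_zero.1 h1
    rw [Finset.mem_filter] at hs
    simp only [Finset.coe_image, Set.mem_image, Finset.mem_coe]
    exact ⟨s, hs.1, by omega⟩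
  rw [finsum_eq_sum_of_support_subset _ hsupp, ← Finset.sum_neg_distrib,
    ← Finset.sum_fiberwise_of_maps_to (t := A.image fun s : Finset (Euc N) => s.card - 1)
      (g := fun s : Finset (Euc N) => s.card - 1) (fun s hs => Finset.mem_image_of_mem _ hs)]
  refine Finset.sum_congr rfl fun k _ => ?_
  have hf : (A.filter fun s => s.card - 1 = k) = A.filter fun s => s.card = k + 1 := by
    apply Finset.filter_congr
    intro s hs
    have := (hA s hs).card_pos
    omega
  rw [hc, hf, Finset.sum_congr rfl (g := fun _ => (-1 : ℤ) ^ k), Finset.sum_const, nsmul_eq_mul,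
    mul_comm]
  intro s hs
  rw [(Finset.mem_filter.1 hs).2, pow_succ]
  ring

/-- The link condition at an even-dimensional simplex, as a sum over its cofaces. -/
lemma sum_cofaces (K : SimplicialComplex ℝ (Euc N)) (A : Finset (Finset (Euc N)))
    (hA : ∀ s, s ∈ A ↔ s ∈ K.faces) (η : Finset (Euc N)) (hη : η ∈ A) (hodd : Odd η.card)
    (hl : eulerChar (linkFaces K η) = 2) :
    ∑ s ∈ A.filter (fun s => η ⊆ s), (-1 : ℤ) ^ s.card = 1 := by
  have hL : linkFaces K η =
      ((A.filter fun ω => Disjoint η ω ∧ η ∪ ω ∈ A : Finset (Finset (Euc N))) :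
        Set (Finset (Euc N))) := by
    ext ω
    simp [linkFaces, hA]
  rw [hL, eulerChar_eq_sum] at hl
  swap
  · intro s hs
    exact K.nonempty_of_mem_faces ((hA s).1 (Finset.mem_filter.1 hs).1)
  have hbij : ∑ ω ∈ A.filter (fun ω => Disjoint η ω ∧ η ∪ ω ∈ A), (-1 : ℤ) ^ ω.card =
      ∑ s ∈ (A.filter (fun s => η ⊆ s)).erase η, - (-1 : ℤ) ^ s.card := by
    refine Finset.sum_bij' (fun ω _ => η ∪ ω) (fun s _ => s \ η) ?_ ?_ ?_ ?_ ?_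
    · intro ω hω
      obtain ⟨h1, h2, h3⟩ := Finset.mem_filter.1 hω
      refine Finset.mem_erase.2 ⟨?_, Finset.mem_filter.2 ⟨h3, Finset.subset_union_left⟩⟩
      intro h
      obtain ⟨x, hx⟩ := K.nonempty_of_mem_faces ((hA ω).1 h1)
      have : x ∈ η := by rw [← h]; exact Finset.mem_union_right _ hx
      exact Finset.disjoint_left.1 h2 this hx
    · intro s hs
      obtain ⟨h1, h2⟩ := Finset.mem_erase.1 hs
      obtain ⟨h3, h4⟩ := Finset.mem_filter.1 h2
      refine Finset.mem_filter.2 ⟨?_, Finset.disjoint_sdiff, ?_⟩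
      · rw [hA] at h3 ⊢
        refine K.down_closed h3 Finset.sdiff_subset ?_
        rw [Finset.sdiff_nonempty]
        intro h
        exact h1 (h.antisymm h4)
      · rw [Finset.union_sdiff_of_subset h4]
        exact h3
    · intro ω hω
      obtain ⟨h1, h2, h3⟩ := Finset.mem_filter.1 hω
      exact Finset.union_sdiff_cancel_left h2
    · intro s hs
      obtain ⟨h1, h2⟩ := Finset.mem_erase.1 hs
      obtain ⟨h3, h4⟩ := Finset.mem_filter.1 h2
      exact Finset.union_sdiff_of_subset h4
    · intro ω hω
      obtain ⟨h1, h2, h3⟩ := Finset.mem_filter.1 hω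
      rw [Finset.card_union_of_disjoint h2, pow_add, hodd.neg_one_pow]
      ring
  rw [hbij, Finset.sum_neg_distrib, neg_neg] at hl
  rw [← Finset.add_sum_erase _ _ (Finset.mem_filter.2 ⟨hη, Finset.Subset.refl η⟩), hl,
    hodd.neg_one_pow]
  norm_num

/-- An integer polynomial with `H (y + 1) = - H y` vanishes at `0`. -/
lemma eval_zero_of_antiperiodic (H : Polynomial ℤ)
    (h : ∀ y : ℤ, H.eval (y + 1) = - H.eval y) : H.eval 0 = 0 := by
  have hk : ∀ k : ℕ, H.eval (2 * (k : ℤ)) = H.eval 0 := by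
    intro k
    induction k with
    | zero => simp
    | succ k ih =>
      have e : (2 * ((k + 1 : ℕ) : ℤ)) = 2 * (k : ℤ) + 1 + 1 := by push_cast; ring
      rw [e, h, h, ih, neg_neg]
  have hC : H = Polynomial.C (H.eval 0) := by
    apply Polynomial.eq_of_infinite_eval_eq
    refine Set.infinite_of_injective_forall_mem (f := fun k : ℕ => 2 * (k : ℤ)) ?_ ?_
    · intro a b hab
      simp only at hab
      omega
    · intro k
      simp [hk k]
  have h1 := h 0
  rw [hC] at h1
  simp only [Polynomial.eval_C] at h1
  omega

/-- The binomial expansion of the face polynomial around `1`. -/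
lemma face_expansion (K : SimplicialComplex ℝ (Euc N)) (A : Finset (Finset (Euc N)))
    (hA : ∀ s, s ∈ A ↔ s ∈ K.faces) (y : ℤ) :
    ∑ s ∈ A, (-1 : ℤ) ^ s.card * (1 + y) ^ s.card = ∑ s ∈ A, (-1 : ℤ) ^ s.card +
      ∑ η ∈ A, y ^ η.card * ∑ s ∈ A.filter (fun s => η ⊆ s), (-1 : ℤ) ^ s.card := by
  have h1 : ∀ s ∈ A, (-1 : ℤ) ^ s.card * (1 + y) ^ s.card =
      (-1 : ℤ) ^ s.card + ∑ η ∈ A, if η ⊆ s then y ^ η.card * (-1 : ℤ) ^ s.card else 0 := by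
    intro s hs
    have hp : s.powerset = insert ∅ (A.filter fun η => η ⊆ s) := by
      ext t
      rw [Finset.mem_powerset, Finset.mem_insert, Finset.mem_filter]
      constructor
      · intro ht
        rcases t.eq_empty_or_nonempty with h | h
        · exact Or.inl h
        · exact Or.inr ⟨(hA t).2 (K.down_closed ((hA s).1 hs) ht h), ht⟩
      · rintro (h | h)
        · rw [h]; exact Finset.empty_subset _
        · exact h.2
    have he : ∅ ∉ A.filter fun η => η ⊆ s := by
      intro h
      exact K.empty_notMem ((hA _).1 (Finset.mem_filter.1 h).1)
    rw [add_comm 1 y, ← Finset.sum_pow_mul_eq_add_pow, hp, Finset.sum_insert he,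
      ← Finset.sum_filter, mul_add, Finset.mul_sum]
    simp [mul_comm]
  rw [Finset.sum_congr rfl h1, Finset.sum_add_distrib, Finset.sum_comm]
  congr 1
  refine Finset.sum_congr rfl fun η _ => ?_
  rw [← Finset.sum_filter, Finset.mul_sum]

/-- If `K` is a finite `n`-dimensional simplicial complex with `n` odd, `n ≥ 3`,
such that `χ(link(η, K)) = 2` for every even-dimensional simplex `η` of `K` of
dimension `i ≤ n - 1`, then `χ(K) = 0`. -/
theorem eulerChar_eq_zero_of_links {N n : ℕ} (hn : 3 ≤ n) (hodd : Odd n)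
    (K : SimplicialComplex ℝ (Euc N)) (hfin : K.faces.Finite) (hdim : IsNDim n K)
    (hlink : ∀ i : ℕ, Even i → i ≤ n - 1 → ∀ η ∈ K.faces, η.card = i + 1 →
      eulerChar (linkFaces K η) = 2) :
    eulerChar K.faces = 0 := by
  have hA : ∀ s, s ∈ hfin.toFinset ↔ s ∈ K.faces := fun s => hfin.mem_toFinset
  have hcoe : K.faces = (hfin.toFinset : Set (Finset (Euc N))) := hfin.coe_toFinset.symm
  generalize hfin.toFinset = A at hA hcoe
  have hg : ∀ η ∈ A, Odd η.card →
      ∑ s ∈ A.filter (fun s => η ⊆ s), (-1 : ℤ) ^ s.card = 1 := by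
    intro η hη ho
    refine sum_cofaces K A hA η hη ho ?_
    have hK := (hA η).1 hη
    have hle := hdim.1 η hK
    obtain ⟨m, hm⟩ := ho
    obtain ⟨p, hp⟩ := hodd
    exact hlink (2 * m) ⟨m, by ring⟩ (by omega) η hK hm
  let F : Polynomial ℤ := ∑ s ∈ A, Polynomial.C ((-1 : ℤ) ^ s.card) * Polynomial.X ^ s.card
  have hF : ∀ y : ℤ, F.eval y = ∑ s ∈ A, (-1 : ℤ) ^ s.card * y ^ s.card := by
    intro y
    simp [F, Polynomial.eval_finsetSum]
  have hrel : ∀ y : ℤ, F.eval (1 + y) + F.eval y = F.eval (1 + -y) + F.eval (-y) := by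
    intro y
    rw [hF, hF, hF, hF, face_expansion K A hA y, face_expansion K A hA (-y), add_assoc, add_assoc]
    refine congrArg _ ?_
    rw [← Finset.sum_add_distrib, ← Finset.sum_add_distrib]
    refine Finset.sum_congr rfl fun η hη => ?_
    rcases Nat.even_or_odd η.card with he | ho
    · rw [he.neg_pow y]
    · rw [hg η hη ho, ho.neg_pow y, ho.neg_one_pow]
      ring
  have h0 := eval_zero_of_antiperiodic (F - F.comp (1 - Polynomial.X)) (by
    intro y
    have := hrel y
    simp only [Polynomial.eval_sub, Polynomial.eval_comp, Polynomial.eval_one, Polynomial.eval_X]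
    rw [show (1 : ℤ) - (y + 1) = -y by ring, show (1 : ℤ) - y = 1 + -y by ring, add_comm y 1]
    linarith)
  simp only [Polynomial.eval_sub, Polynomial.eval_comp, Polynomial.eval_one, Polynomial.eval_X,
    sub_zero] at h0
  have hz : F.eval 0 = 0 := by
    rw [hF]
    refine Finset.sum_eq_zero fun s hs => ?_
    have := (K.nonempty_of_mem_faces ((hA s).1 hs)).card_pos
    rw [zero_pow (by omega), mul_zero]
  have h1 : F.eval 1 = 0 := by omega
  rw [hF] at h1
  rw [hcoe, eulerChar_eq_sum A fun s hs => K.nonempty_of_mem_faces ((hA s).1 hs)]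
  simpa using h1

end AngleDefectPaper
end
end
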